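/- arXiv:2605.14955 — 3 statements merged into one kernel-verified Lean document; each statement's English description precedes it below -/
import Mathlib

section
/- Let w be a finite word and u a primitive word with ℓ = |u| such that u² is a factor of w, and let M = M(u) be the number of integers q ≥ ℓ for which the small-circuit condition SC_w(u,q) holds. Then for every integer i with 1 ≤ i ≤ ℓ, the set QClass_w(u) ∩ [u]_{2ℓ+M−i} has at most i elements. -/
/-!
Index the length-`n` factors of `u^ω` by their starting position modulo `ℓ = |u|`, so that there
are at most `ℓ` of them. Counting the integers `q` with `SC w u q` (finitely many, since `w` is
finite) shows that some `q` in `[ℓ, ℓ + M]` violates the condition; hence some factor of `u^ω` of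
length at most `ℓ + M + 1`, and so (extending it to the right) one of length exactly `ℓ + M + 1`,
is missing from `w` (`exists_missing`). If it starts at position `s₀`, then it occurs in each factor
of length `2ℓ + M - i` starting at one of the positions `s₀ + 1 + i, …, s₀ + ℓ`, since it recurs at
`s₀ + ℓ`. Up to the period `ℓ` only the `i` starting positions `s₀ + 1, …, s₀ + i` remain available
for factors of `w`.
-/

/-- `wpow u k` is the concatenation of `k` copies of the word `u`. -/
def wpow {α : Type*} (u : List α) : ℕ → List α
  | 0 => []
  | n + 1 => u ++ wpow u n

/-- A nonempty word is primitive if it is not a `k`-th power, `k ≥ 2`, of any word. -/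
def Primitive {α : Type*} (u : List α) : Prop :=
  u ≠ [] ∧ ∀ (v : List α) (k : ℕ), 2 ≤ k → u ≠ wpow v k

/-- `v` is a rational power of exponent at least 2 of the nonempty word `p`:
`v = p^k p'` with `k ≥ 2` an integer and `p'` a (possibly empty) proper prefix of `p`. -/
def IsRatPow {α : Type*} (p v : List α) : Prop :=
  p ≠ [] ∧ ∃ (k : ℕ) (p' : List α), 2 ≤ k ∧ p' <+: p ∧ p' ≠ p ∧ v = wpow p k ++ p'

/-- Two words are conjugate. -/
def Conj {α : Type*} (u v : List α) : Prop :=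
  ∃ x y, u = x ++ y ∧ v = y ++ x

/-- The set of factors of a word. -/
def Fac {α : Type*} (w : List α) : Set (List α) := {v | v <:+: w}

/-- `PerFac u i` is the set `[u]_i` of length-`i` factors of the infinite periodic
word `u^ω` (equivalently, of `u^(i+1)` when `u` is nonempty). -/
def PerFac {α : Type*} (u : List α) (i : ℕ) : Set (List α) :=
  {v | v.length = i ∧ v <:+: wpow u (i + 1)}

/-- The small-circuit condition `SC_w(u,q)`: `q ≥ |u|`, `[u]_q ⊆ Fac(w)` and
`[u]_{q+1} ⊆ Fac(w)`. -/
def SC {α : Type*} (w u : List α) (q : ℕ) : Prop :=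
  u.length ≤ q ∧ PerFac u q ⊆ Fac w ∧ PerFac u (q + 1) ⊆ Fac w

/-- `M(u)`: the number of integers `q` for which `SC_w(u,q)` holds. -/
noncomputable def Mnum {α : Type*} (w u : List α) : ℕ :=
  Set.ncard {q : ℕ | SC w u q}

/-- `QClass_w(u)`: the set of factors of `w` that are rational powers of exponent
at least 2 of some conjugate of `u`. -/
def QClass {α : Type*} (w u : List α) : Set (List α) :=
  {v | v <:+: w ∧ ∃ p, Conj u p ∧ IsRatPow p v}

/-- `RP(w)`: the number of distinct factors of `w` that are rational powers of
exponent at least 2 of some nonempty word. -/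
noncomputable def RP {α : Type*} (w : List α) : ℕ :=
  Set.ncard {v | v <:+: w ∧ ∃ p, IsRatPow p v}

/-- The letter at position `k` of the infinite periodic word `u^ω`. -/
def perLetter {α : Type*} (u : List α) (hu : 0 < u.length) (k : ℕ) : α :=
  u[k % u.length]'(Nat.mod_lt _ hu)

/-- The factor of the infinite word `f` of length `n` starting at position `s`. -/
def seg {α : Type*} (f : ℕ → α) (s n : ℕ) : List α := (List.range' s n).map f

theorem length_seg {α : Type*} (f : ℕ → α) (s n : ℕ) : (seg f s n).length = n := by
  simp [seg]

theorem seg_append {α : Type*} (f : ℕ → α) (s m n : ℕ) :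
    seg f s m ++ seg f (s + m) n = seg f s (m + n) := by
  rw [seg, seg, seg, ← List.map_append, List.range'_append_1]

theorem seg_infix {α : Type*} (f : ℕ → α) {s m t n : ℕ} (h1 : t ≤ s) (h2 : s + m ≤ t + n) :
    seg f s m <:+: seg f t n := by
  obtain ⟨a, rfl⟩ := Nat.exists_eq_add_of_le h1
  obtain ⟨b, hb⟩ := Nat.exists_eq_add_of_le h2
  obtain rfl : n = a + m + b := by omega
  exact ⟨seg f t a, seg f (t + a + m) b, by rw [seg_append, add_assoc t a m, seg_append]⟩

theorem eq_seg_of_infix {α : Type*} (f : ℕ → α) {v : List α} {t n : ℕ} (h : v <:+: seg f t n) :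
    ∃ s, v = seg f s v.length := by
  obtain ⟨a, b, h⟩ := h
  have hn : n = a.length + (v.length + b.length) := by
    have := congrArg List.length h
    rw [length_seg] at this
    simp at this
    omega
  rw [hn, ← seg_append, ← seg_append, List.append_assoc] at h
  have h' := (List.append_inj h (length_seg _ _ _).symm).2
  exact ⟨_, (List.append_inj h' (length_seg _ _ _).symm).1⟩

theorem seg_add_period {α : Type*} (u : List α) (hu : 0 < u.length) (s n k : ℕ) :
    seg (perLetter u hu) (s + u.length * k) n = seg (perLetter u hu) s n := by
  apply List.ext_getElem
  · simp [length_seg]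
  · intro j h1 h2
    have : (s + u.length * k + j) % u.length = (s + j) % u.length := by
      rw [add_right_comm, Nat.add_mul_mod_self_left]
    simp [seg, perLetter, this]

theorem wpow_eq_seg {α : Type*} (u : List α) (hu : 0 < u.length) (k : ℕ) :
    wpow u k = seg (perLetter u hu) 0 (u.length * k) := by
  induction k with
  | zero => simp [wpow, seg]
  | succ k ih =>
    have h0 : seg (perLetter u hu) 0 u.length = u := by
      apply List.ext_getElem
      · simp [length_seg]
      · intro j h1 h2
        simp [seg, perLetter, Nat.mod_eq_of_lt h2]
    have h1 : seg (perLetter u hu) (0 + u.length) (u.length * k)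
        = seg (perLetter u hu) 0 (u.length * k) := by
      simpa using seg_add_period u hu 0 (u.length * k) 1
    rw [wpow, ih, Nat.mul_succ, add_comm (u.length * k), ← seg_append, h0, h1]

theorem mem_PerFac_iff {α : Type*} (u : List α) (hu : 0 < u.length) (n : ℕ) (v : List α) :
    v ∈ PerFac u n ↔ ∃ s, v = seg (perLetter u hu) s n := by
  constructor
  · rintro ⟨hl, hv⟩
    rw [wpow_eq_seg u hu] at hv
    rw [← hl]
    exact eq_seg_of_infix _ hv
  · rintro ⟨s, rfl⟩
    refine ⟨length_seg _ _ _, ?_⟩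
    rw [wpow_eq_seg u hu, ← Nat.mod_add_div s u.length, seg_add_period]
    refine seg_infix _ (Nat.zero_le _) ?_
    have := Nat.mod_lt s hu
    nlinarith [Nat.zero_le n]

theorem finite_SC {α : Type*} (w u : List α) (hu : 0 < u.length) : {q : ℕ | SC w u q}.Finite := by
  refine (Set.finite_Iic w.length).subset ?_
  rintro q ⟨-, hq, -⟩
  have : seg (perLetter u hu) 0 q <:+: w := hq ((mem_PerFac_iff u hu q _).2 ⟨0, rfl⟩)
  simpa [length_seg] using this.length_le

/-- Some factor of `u^ω` of length `ℓ + M + 1` does not occur in `w`. -/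
theorem exists_missing {α : Type*} (w u : List α) (hu : 0 < u.length) :
    ∃ s, ¬ seg (perLetter u hu) s (u.length + Mnum w u + 1) <:+: w := by
  by_contra! hall
  -- Otherwise all of the `M + 1` integers in `[ℓ, ℓ + M]` satisfy the small-circuit condition.
  have hsub : (Finset.Icc u.length (u.length + Mnum w u) : Set ℕ) ⊆ {q : ℕ | SC w u q} := by
    intro q hq
    rw [Finset.coe_Icc, Set.mem_Icc] at hq
    have key : ∀ r, r ≤ u.length + Mnum w u + 1 → PerFac u r ⊆ Fac w := by
      intro r hr v hv
      obtain ⟨s, rfl⟩ := (mem_PerFac_iff u hu r v).1 hv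
      exact (seg_infix _ le_rfl (by omega)).trans (hall s)
    exact ⟨hq.1, key q (by omega), key (q + 1) (by omega)⟩
  have hcard := Set.ncard_le_ncard hsub (finite_SC w u hu)
  rw [Set.ncard_coe_finset, Nat.card_Icc] at hcard
  change _ ≤ Mnum w u at hcard
  omega

/-- For every integer `1 ≤ i ≤ ℓ`, `QClass_w(u) ∩ [u]_{2ℓ+M-i}` has at most
`i` elements. -/
theorem stmt_3 {α : Type*} (w u : List α) (hu : Primitive u)
    (hsq : (u ++ u) <:+: w) :
    ∀ i : ℕ, 1 ≤ i → i ≤ u.length →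
      (QClass w u ∩ PerFac u (2 * u.length + Mnum w u - i)).ncard ≤ i := by
  classical
  intro i hi1 hi
  have hl : 0 < u.length := List.length_pos_iff.2 hu.1
  obtain ⟨s₀, hs₀⟩ := exists_missing w u hl
  set f := perLetter u hl with hf
  set n := 2 * u.length + Mnum w u - i with hn
  have hsub : QClass w u ∩ PerFac u n ⊆
      ((Finset.range i).image fun j => seg f (s₀ + 1 + j) n : Finset (List α)) := by
    rintro v ⟨⟨hvw, -⟩, hv⟩
    obtain ⟨s, rfl⟩ := (mem_PerFac_iff u hl n v).1 hv
    -- Shift `s` by multiples of `ℓ` to a position `s₀ + 1 + j` with `j < ℓ`; the summand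
    -- `ℓ * (s₀ + 1)` keeps the subtraction nonnegative.
    obtain ⟨j, hj, hsj⟩ : ∃ j < u.length, seg f s n = seg f (s₀ + 1 + j) n := by
      have hle : s₀ + 1 ≤ s + u.length * (s₀ + 1) := by nlinarith
      refine ⟨(s + u.length * (s₀ + 1) - (s₀ + 1)) % u.length, Nat.mod_lt _ hl, ?_⟩
      have hdiv := Nat.mod_add_div (s + u.length * (s₀ + 1) - (s₀ + 1)) u.length
      rw [hf, ← seg_add_period u hl s n (s₀ + 1),
        ← seg_add_period u hl (s₀ + 1 + _) n
          ((s + u.length * (s₀ + 1) - (s₀ + 1)) / u.length), add_assoc (s₀ + 1), hdiv,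
        Nat.add_sub_cancel' hle]
    rw [Finset.coe_image, Set.mem_image]
    refine ⟨j, ?_, hsj.symm⟩
    rw [Finset.mem_coe, Finset.mem_range]
    by_contra! hij
    -- For `j ≥ i` the word covers the missing factor at its occurrence at `s₀ + ℓ`.
    apply hs₀
    have hper := seg_add_period u hl s₀ (u.length + Mnum w u + 1) 1
    rw [mul_one] at hper
    rw [← hper]
    refine (seg_infix f (t := s₀ + 1 + j) (n := n) (by omega) (by omega)).trans ?_
    rw [← hsj]
    exact hvw
  calc _ ≤ _ := Set.ncard_le_ncard hsub (Finset.finite_toSet _)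
    _ ≤ i := by
      rw [Set.ncard_coe_finset]
      exact Finset.card_image_le.trans (Finset.card_range i).le
end

section
/- Let w be a finite word and u a primitive word with ℓ = |u| such that u² is a factor of w, and let M = M(u) be the number of integers q ≥ ℓ for which the small-circuit condition SC_w(u,q) holds. If M ≤ ℓ, then |QClass_w(u)| ≤ M(M+1)/2; if M > ℓ, then |QClass_w(u)| ≤ ℓ(ℓ+1)/2 + ℓ(M−ℓ). -/
/-! ### Windows of the periodic word `u^ω` -/

/-- The factor of length `n` of the periodic word `u^ω` starting at position `a`. -/
def perWord {α : Type*} (u : List α) (h : 0 < u.length) (a n : ℕ) : List α :=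
  (List.range n).map fun i => u[(a + i) % u.length]'(Nat.mod_lt _ h)

section perWord

variable {α : Type*} {u : List α} (h : 0 < u.length)

@[simp] lemma perWord_length (a n : ℕ) : (perWord u h a n).length = n := by
  simp [perWord]

lemma perWord_add (a m n : ℕ) :
    perWord u h a (m + n) = perWord u h a m ++ perWord u h (a + m) n := by
  simp [perWord, List.range_add, Function.comp_def, Nat.add_assoc]

lemma perWord_congr {a b : ℕ} (hab : a % u.length = b % u.length) (n : ℕ) :
    perWord u h a n = perWord u h b n := by
  have key : ∀ i, (a + i) % u.length = (b + i) % u.length := fun i =>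
    Nat.ModEq.add_right i hab
  simp [perWord, key]

lemma perWord_zero_length : perWord u h 0 u.length = u := by
  apply List.ext_getElem
  · simp
  · intro i h1 h2
    simp [perWord, Nat.mod_eq_of_lt h2]

lemma perWord_isFactor {a k n n' : ℕ} (hk : k + n' ≤ n) :
    perWord u h (a + k) n' <:+: perWord u h a n := by
  obtain ⟨r, rfl⟩ := Nat.exists_eq_add_of_le hk
  exact ⟨perWord u h a k, perWord u h (a + (k + n')) r, by
    rw [perWord_add, perWord_add]⟩

lemma eq_perWord_of_isFactor {v : List α} {a n : ℕ} (hv : v <:+: perWord u h a n) :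
    ∃ k, v = perWord u h (a + k) v.length ∧ k + v.length ≤ n := by
  obtain ⟨s, t, hst⟩ := hv
  have hn : n = s.length + v.length + t.length := by
    have := congrArg List.length hst
    simp at this
    omega
  refine ⟨s.length, ?_, by omega⟩
  rw [hn, perWord_add, perWord_add] at hst
  have h1 := (List.append_inj hst (by simp)).1
  exact (List.append_inj h1 (by simp)).2

lemma wpow_eq_perWord (k : ℕ) : wpow u k = perWord u h 0 (k * u.length) := by
  induction k with
  | zero => simp [wpow, perWord]
  | succ k ih =>
    rw [wpow, ih, Nat.succ_mul, Nat.add_comm, perWord_add, perWord_zero_length]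
    rw [perWord_congr h (a := 0 + u.length) (b := 0) (by simp)]

/-- `[u]_i` consists of the windows of length `i`, at arbitrary positions. -/
lemma perFac_subset_iff (w : List α) (i : ℕ) :
    PerFac u i ⊆ Fac w ↔ ∀ a, perWord u h a i <:+: w := by
  constructor
  · intro H a
    rw [← perWord_congr h (Nat.mod_mod a u.length)]
    apply H
    refine ⟨by simp, ?_⟩
    rw [wpow_eq_perWord h]
    have := Nat.mod_lt a h
    have h2 : a % u.length + i ≤ (i + 1) * u.length := by nlinarith
    simpa using perWord_isFactor h (a := 0) h2
  · rintro H v ⟨hl, hv⟩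
    rw [wpow_eq_perWord h] at hv
    obtain ⟨k, hk, -⟩ := eq_perWord_of_isFactor h hv
    rw [hl] at hk
    rw [hk]
    exact H _

end perWord

/-! ### Rational powers of conjugates as windows -/

lemma append_wpow_swap {α : Type*} (x y : List α) (k : ℕ) :
    x ++ wpow (y ++ x) k = wpow (x ++ y) k ++ x := by
  induction k with
  | zero => simp [wpow]
  | succ k ih => simp only [wpow, List.append_assoc, ← ih]

lemma wpow_succ' {α : Type*} (p : List α) (k : ℕ) : wpow p (k + 1) = wpow p k ++ p := by
  simpa [wpow] using append_wpow_swap p [] k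

lemma length_wpow {α : Type*} (p : List α) (k : ℕ) : (wpow p k).length = k * p.length := by
  induction k with
  | zero => simp [wpow]
  | succ k ih => simp [wpow, ih]; ring

lemma qClass_eq_perWord {α : Type*} {w u v : List α} (h : 0 < u.length) (hv : v ∈ QClass w u) :
    ∃ a < u.length, v = perWord u h a v.length ∧ 2 * u.length ≤ v.length := by
  obtain ⟨-, p, ⟨x, y, rfl, rfl⟩, -, k, p', hk, ⟨t, ht⟩, -, rfl⟩ := hv
  have hinf : wpow (y ++ x) k ++ p' <:+: wpow (x ++ y) (k + 2) := by
    refine ⟨x, t ++ y, ?_⟩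
    have e : x ++ (wpow (y ++ x) k ++ p') ++ (t ++ y)
        = (x ++ (wpow (y ++ x) k ++ (p' ++ t))) ++ y := by simp
    rw [e, ht, ← wpow_succ', append_wpow_swap, wpow_succ' _ (k + 1)]
    simp
  rw [wpow_eq_perWord h] at hinf
  obtain ⟨c, hc, -⟩ := eq_perWord_of_isFactor h hinf
  refine ⟨(0 + c) % (x ++ y).length, Nat.mod_lt _ h, ?_, ?_⟩
  · rw [perWord_congr h (Nat.mod_mod _ _)]
    exact hc
  · simp only [List.length_append, length_wpow]
    nlinarith

/-! ### Counting starting positions -/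

/-- If a set of starting positions `a < ℓ` is such that none of the `d` positions
`a, …, a + d - 1` is congruent to `b` modulo `ℓ`, it has at most `ℓ - d` elements: the offset from
`a` up to `b` is injective in `a` and lies in `[d, ℓ)`. -/
lemma card_starts_le {l d b : ℕ} (hl : 0 < l) (S : Finset ℕ) (hS : ∀ a ∈ S, a < l)
    (hb : ∀ a ∈ S, ∀ i < d, (a + i) % l ≠ b % l) : S.card ≤ l - d := by
  rw [← Nat.card_Ico]
  have hmod : ∀ a ∈ S, (a + (b + l - a) % l) % l = b % l := by
    intro a ha
    have := hS a ha
    rw [Nat.add_mod_mod, show a + (b + l - a) = b + l by omega, Nat.add_mod_right]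
  apply Finset.card_le_card_of_injOn (fun a => (b + l - a) % l)
  · intro a ha
    have h1 := hmod a ha
    simp only [Finset.coe_Ico, Set.mem_Ico]
    refine ⟨?_, Nat.mod_lt _ hl⟩
    by_contra hlt
    exact hb a ha _ (by omega) h1
  · intro a ha a' ha' heq
    have e : (a + (b + l - a) % l) % l = (a' + (b + l - a) % l) % l := by
      rw [hmod a ha, show (b + l - a) % l = (b + l - a') % l from heq, hmod a' ha']
    have e' : a % l = a' % l := Nat.ModEq.add_right_cancel' _ e
    rwa [Nat.mod_eq_of_lt (hS a ha), Nat.mod_eq_of_lt (hS a' ha')] at e'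

lemma sum_min_le (l M : ℕ) (hM : M ≤ l) :
    ∑ j ∈ Finset.range M, min l (M - j) = M * (M + 1) / 2 := by
  have h1 : ∑ j ∈ Finset.range M, min l (M - j) = ∑ j ∈ Finset.range M, (j + 1) := by
    rw [← Finset.sum_range_reflect]
    apply Finset.sum_congr rfl
    intro j hj
    have := Finset.mem_range.1 hj
    omega
  have h2 := Finset.sum_range_succ' (fun i => i) M
  have h3 := Finset.sum_range_id (M + 1)
  simp only [add_tsub_cancel_right] at h3
  rw [h1, Nat.mul_comm M]
  omega

lemma sum_min_gt (l M : ℕ) (hM : l ≤ M) :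
    ∑ j ∈ Finset.range M, min l (M - j) = l * (l + 1) / 2 + l * (M - l) := by
  obtain ⟨d, rfl⟩ := Nat.exists_eq_add_of_le hM
  rw [← sum_min_le l l le_rfl, Nat.add_comm l d, Finset.sum_range_add]
  have h1 : ∑ j ∈ Finset.range d, min l (d + l - j) = ∑ j ∈ Finset.range d, l := by
    apply Finset.sum_congr rfl
    intro j hj
    have := Finset.mem_range.1 hj
    omega
  rw [h1, Finset.sum_const, Finset.card_range, smul_eq_mul, Nat.add_sub_cancel,
    Nat.mul_comm d, Nat.add_comm]
  congr 1
  apply Finset.sum_congr rfl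
  intro j _
  congr 1
  omega

/-! ### Small circuits and the bound on `QClass_w(u)` -/

/-- `ℓ + M(u)` is the largest length `m` such that all windows of length `m` are factors of `w`. -/
lemma forall_infix_iff {α : Type*} {w u : List α} (h : 0 < u.length) (hsq : (u ++ u) <:+: w)
    (n : ℕ) : (∀ a, perWord u h a n <:+: w) ↔ n ≤ u.length + Mnum w u := by
  classical
  set A : ℕ → Prop := fun n => ∀ a, perWord u h a n <:+: w with hA
  have hanti : ∀ {n n'}, n' ≤ n → A n → A n' := fun {n n'} hle H a =>
    (perWord_isFactor h (a := a) (k := 0) (by omega)).trans (H a)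
  have hex : ∃ n, ¬ A (n + 1) := by
    refine ⟨w.length, fun H => ?_⟩
    have := (H 0).length_le
    simp at this
  obtain ⟨m, hm, hm'⟩ : ∃ m, A m ∧ ¬ A (m + 1) := by
    refine ⟨Nat.find hex, ?_, Nat.find_spec hex⟩
    rcases hf : Nat.find hex with _ | k
    · intro a
      simp [perWord]
    · have := Nat.find_min hex (m := k) (by omega)
      exact not_not.1 this
  have hiff : ∀ n, A n ↔ n ≤ m := fun n =>
    ⟨fun H => by by_contra hlt; exact hm' (hanti (by omega) H), fun hle => hanti hle hm⟩
  -- The square contains a window of length `ℓ + 1` at each residue.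
  have hbase : u.length + 1 ≤ m := by
    rw [← hiff]
    intro a
    rw [← perWord_congr h (Nat.mod_mod a u.length)]
    refine List.IsInfix.trans ?_ hsq
    have e : u ++ u = perWord u h 0 (2 * u.length) := by
      rw [← wpow_eq_perWord h]; simp [wpow]
    rw [e]
    have := Nat.mod_lt a h
    simpa using perWord_isFactor h (a := 0) (k := a % u.length) (n' := u.length + 1)
      (n := 2 * u.length) (by omega)
  have hset : {q : ℕ | SC w u q} = ↑(Finset.Ico u.length m) := by
    ext q
    have h1 := hiff q
    have h2 := hiff (q + 1)
    simp only [hA] at h1 h2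
    simp only [Set.mem_ofPred_eq, SC, perFac_subset_iff h, h1, h2, Finset.coe_Ico, Set.mem_Ico]
    omega
  have hM : Mnum w u = m - u.length := by
    rw [Mnum, hset, Set.ncard_coe_finset, Nat.card_Ico]
  rw [hM, show u.length + (m - u.length) = m by omega]
  exact hiff n

lemma qClass_ncard_le {α : Type*} {w u : List α} (h : 0 < u.length) (hsq : (u ++ u) <:+: w) :
    (QClass w u).ncard ≤ ∑ j ∈ Finset.range (Mnum w u), min u.length (Mnum w u - j) := by
  classical
  set l := u.length with hl
  set M := Mnum w u with hMdef
  have hiff := forall_infix_iff h hsq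
  rw [← hl, ← hMdef] at hiff
  set S : ℕ → Finset ℕ := fun j =>
    (Finset.range l).filter fun a => perWord u h a (2 * l + j) <:+: w with hS
  have hcard : ∀ j ∈ Finset.range M, (S j).card ≤ min l (M - j) := by
    intro j hj
    have hj' := Finset.mem_range.1 hj
    have h1 : (S j).card ≤ l := by
      simpa using Finset.card_filter_le (Finset.range l) _
    refine le_min h1 ?_
    by_cases hc : l + j ≤ M
    · omega
    have hnot : ¬ ∀ a, perWord u h a (l + M + 1) <:+: w := by
      rw [hiff]; omega
    push Not at hnot
    obtain ⟨b, hb⟩ := hnot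
    have := card_starts_le (d := l + j - M) (b := b) h (S j)
      (fun a ha => by simpa using (Finset.mem_filter.1 ha).1)
      (fun a ha i hi heq => by
        apply hb
        rw [← perWord_congr h heq]
        exact (perWord_isFactor h (by omega)).trans (Finset.mem_filter.1 ha).2)
    omega
  have hsub : QClass w u ⊆
      ↑(((Finset.range M).sigma S).image fun x => perWord u h x.2 (2 * l + x.1)) := by
    intro v hv
    obtain ⟨a, ha, hva, hlen⟩ := qClass_eq_perWord h hv
    have hvw : v <:+: w := hv.1
    have hn : v.length - l + 1 ≤ l + M := by
      rw [← hiff]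
      intro c
      -- Shift the start `c` into the `ℓ` consecutive positions from `a` on.
      have hc : (a + (c + l - a) % l) % l = c % l := by
        rw [Nat.add_mod_mod, show a + (c + l - a) = c + l by omega, Nat.add_mod_right]
      rw [← perWord_congr h hc]
      have hlt := Nat.mod_lt (c + l - a) h
      rw [hva] at hvw
      exact (perWord_isFactor h (by omega)).trans hvw
    simp only [Finset.coe_image, Set.mem_image, Finset.mem_coe, Finset.mem_sigma]
    have hj : v.length - 2 * l < M := by have hl0 : 0 < l := h; omega
    have e : 2 * l + (v.length - 2 * l) = v.length := by omega
    refine ⟨⟨v.length - 2 * l, a⟩, ⟨Finset.mem_range.2 hj, ?_⟩, ?_⟩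
    · simp only [hS, Finset.mem_filter, Finset.mem_range]
      rw [e, ← hva]
      exact ⟨ha, hvw⟩
    · simp only
      rw [e, ← hva]
  calc (QClass w u).ncard
      ≤ (((Finset.range M).sigma S).image fun x => perWord u h x.2 (2 * l + x.1)).card := by
        rw [← Set.ncard_coe_finset]
        exact Set.ncard_le_ncard hsub (Finset.finite_toSet _)
    _ ≤ ((Finset.range M).sigma S).card := Finset.card_image_le
    _ = ∑ j ∈ Finset.range M, (S j).card := Finset.card_sigma _ _
    _ ≤ _ := Finset.sum_le_sum hcard

/-- If `M ≤ ℓ` then `|QClass_w(u)| ≤ M(M+1)/2`; if `M > ℓ` then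
`|QClass_w(u)| ≤ ℓ(ℓ+1)/2 + ℓ(M-ℓ)`. -/
theorem stmt_4 {α : Type*} (w u : List α) (hu : Primitive u)
    (hsq : (u ++ u) <:+: w) :
    (Mnum w u ≤ u.length →
      (QClass w u).ncard ≤ Mnum w u * (Mnum w u + 1) / 2) ∧
    (u.length < Mnum w u →
      (QClass w u).ncard ≤
        u.length * (u.length + 1) / 2 + u.length * (Mnum w u - u.length)) := by
  have h : 0 < u.length := List.length_pos_of_ne_nil hu.1
  have key := qClass_ncard_le h hsq
  exact ⟨fun hM => key.trans (sum_min_le _ _ hM).le,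
    fun hM => key.trans (sum_min_gt _ _ hM.le).le⟩
end

section
/- Let w be a finite word of length n and set N = n+1. Let u_1, …, u_t be pairwise non-conjugate primitive words such that u_i² is a factor of w for each i, with ℓ_i = |u_i|, m_i = M(u_i), and active interval I_i = {q : SC_w(u_i,q) holds}. Then for every j with 1 ≤ j ≤ t, Σ_{i ≠ j} |I_i ∩ I_j| ≤ N − 2ℓ_j − m_j. -/
/-- The complexity function: the number of distinct factors of `w` of length `m`. -/
noncomputable def complexity {α : Type*} (w : List α) (m : ℕ) : ℕ :=
  Set.ncard {v : List α | v <:+: w ∧ v.length = m}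

/-- The `k`-th letter of the infinite periodic word `u^ω`. -/
def per {α : Type*} (u : List α) (h : u ≠ []) (k : ℕ) : α :=
  u[k % u.length]'(Nat.mod_lt _ (List.length_pos_iff.2 h))

/-- The length-`q` factor of the infinite word `f` that starts at position `k`. -/
def window {α : Type*} (f : ℕ → α) (k q : ℕ) : List α :=
  (List.range q).map fun i => f (k + i)

/-! ### Windows of periodic words -/

section Windows

variable {α : Type*}

@[simp] lemma window_length (f : ℕ → α) (k q : ℕ) : (window f k q).length = q := by
  simp [window]

lemma window_add (f : ℕ → α) (k a b : ℕ) :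
    window f k (a + b) = window f k a ++ window f (k + a) b := by
  simp [window, List.range_add, Function.comp_def, add_assoc]

lemma window_succ (f : ℕ → α) (k q : ℕ) :
    window f k (q + 1) = f k :: window f (k + 1) q := by
  rw [add_comm q 1, window_add]; simp [window]

lemma window_eq_iff (f g : ℕ → α) (a b q : ℕ) :
    window f a q = window g b q ↔ ∀ x < q, f (a + x) = g (b + x) := by
  simp [window]

lemma window_infix (f : ℕ → α) {k q m : ℕ} (h : k + q ≤ m) :
    window f k q <:+: window f 0 m := by
  obtain ⟨r, rfl⟩ := Nat.exists_eq_add_of_le h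
  refine ⟨window f 0 k, window f (k + q) r, ?_⟩
  simp [window_add]

lemma eq_window_of_infix (f : ℕ → α) {m : ℕ} {v : List α} (h : v <:+: window f 0 m) :
    ∃ k, v = window f k v.length := by
  obtain ⟨s, t, h⟩ := h
  have hm : m = s.length + v.length + t.length := by
    simpa [add_assoc] using (congrArg List.length h).symm
  subst hm
  rw [window_add, window_add] at h
  have h1 := (List.append_inj h (by simp)).1
  exact ⟨0 + s.length, (List.append_inj h1 (by simp)).2⟩

lemma per_periodic (u : List α) (h : u ≠ []) : Function.Periodic (per u h) u.length := by
  intro x; simp [per]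

lemma window_per_self (u : List α) (h : u ≠ []) : window (per u h) 0 u.length = u := by
  apply List.ext_getElem
  · simp
  · intro i h1 h2
    simp [window, per, Nat.mod_eq_of_lt h2]

lemma wpow_window (f : ℕ → α) {d : ℕ} (hf : Function.Periodic f d) (k : ℕ) :
    wpow (window f 0 d) k = window f 0 (k * d) := by
  induction k with
  | zero => simp [wpow, window]
  | succ k ih =>
    rw [wpow, ih, add_mul, one_mul, add_comm (k * d), window_add]
    congr 1
    rw [window_eq_iff]
    intro x _
    rw [add_right_comm, hf]

lemma wpow_eq_window (u : List α) (h : u ≠ []) (k : ℕ) :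
    wpow u k = window (per u h) 0 (k * u.length) := by
  conv_lhs => rw [← window_per_self u h]
  exact wpow_window _ (per_periodic u h) k

/-- `[u]_q` is the set of all length-`q` windows of `u^ω`. -/
lemma mem_perFac_iff (u : List α) (h : u ≠ []) (q : ℕ) (v : List α) :
    v ∈ PerFac u q ↔ ∃ k, v = window (per u h) k q := by
  constructor
  · rintro ⟨rfl, hv⟩
    rw [wpow_eq_window u h] at hv
    exact eq_window_of_infix _ hv
  · rintro ⟨k, rfl⟩
    refine ⟨by simp, ?_⟩
    have hpos := List.length_pos_iff.2 h
    have hk : window (per u h) k q = window (per u h) (k % u.length) q := by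
      rw [window_eq_iff]; intro x _
      simp [per]
    rw [hk, wpow_eq_window u h]
    apply window_infix
    have := Nat.mod_lt k hpos
    nlinarith

end Windows

/-! ### Primitive words and unbordered conjugates -/

section Primitivity

variable {α : Type*}

/-- For a primitive word `u`, the least period of `u^ω` is `|u|`. -/
lemma Primitive.not_periodic {u : List α} (hu : Primitive u) {d : ℕ} (hd : 0 < d)
    (hdl : d < u.length) : ¬ Function.Periodic (per u hu.1) d := by
  intro hper
  classical
  have hex : ∃ d, 0 < d ∧ Function.Periodic (per u hu.1) d := ⟨d, hd, hper⟩
  obtain ⟨hc, hcp⟩ := Nat.find_spec hex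
  have hcd : Nat.find hex ≤ d := Nat.find_min' hex ⟨hd, hper⟩
  set c := Nat.find hex with hcdef
  have hmod : Function.Periodic (per u hu.1) (u.length % c) := by
    intro x
    have h1 := (hcp.nat_mul (u.length / c)) (x + u.length % c)
    have h2 : x + u.length % c + u.length / c * c = x + u.length := by
      rw [add_assoc, Nat.mod_add_div']
    simp only [Nat.cast_id] at h1
    rw [h2, per_periodic u hu.1] at h1
    exact h1.symm
  have h0 : u.length % c = 0 := by
    by_contra hne
    have := Nat.find_min' hex ⟨Nat.pos_of_ne_zero hne, hmod⟩
    exact absurd (Nat.mod_lt u.length hc) (by omega)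
  have hdiv : u.length / c * c = u.length := Nat.div_mul_cancel (Nat.dvd_of_mod_eq_zero h0)
  refine hu.2 (window (per u hu.1) 0 c) (u.length / c) ?_ ?_
  · by_contra hlt
    have : u.length / c ≤ 1 := by omega
    nlinarith
  · rw [wpow_window _ hcp, hdiv, window_per_self]

/-- Every primitive word has an unbordered conjugate: some length-`ℓ` window of a word with
least period `ℓ` has no period smaller than `ℓ`. The window is the lexicographically
smallest one, i.e. the Lyndon conjugate for an arbitrary order of the letters. -/
lemma exists_unbordered (f : ℕ → α) {l : ℕ} (hl : 0 < l) (hf : Function.Periodic f l)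
    (hmin : ∀ d, 0 < d → d < l → ¬ Function.Periodic f d) :
    ∃ b, ∀ d, 0 < d → d < l → ∃ x, x + d < l ∧ f (b + x + d) ≠ f (b + x) := by
  classical
  let _ : LinearOrder α := IsWellOrder.linearOrder WellOrderingRel
  obtain ⟨b, -, hb⟩ := Finset.exists_min_image (Finset.range l)
    (fun k => toLex (fun i => f (k + i))) ⟨0, by simpa using hl⟩
  have hb' : ∀ k, toLex (fun i => f (b + i)) ≤ toLex (fun i => f (k + i)) := by
    intro k
    have h1 := hb (k % l) (by simpa using Nat.mod_lt k hl)
    have h2 : (fun i => f (k % l + i)) = fun i => f (k + i) := by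
      funext i
      rw [← hf.map_mod_nat (k % l + i), ← hf.map_mod_nat (k + i)]
      simp
    simpa only [h2] using h1
  refine ⟨b, fun d hd hdl => ?_⟩
  by_contra! hcon
  rcases (hb' (b + d)).lt_or_eq with hlt | heq
  · -- The first difference with the `d`-shift lies beyond the border of length `l - d`, so the
    -- strict inequality survives shifting both sides by `l - d`, which contradicts minimality.
    obtain ⟨i, hi, hi'⟩ := hlt
    simp only [Pi.toLex_apply] at hi hi'
    have hil : l - d ≤ i := by
      by_contra hlt
      have := hcon i (by omega)
      rw [add_right_comm] at this
      exact absurd hi' (by rw [this]; exact lt_irrefl _)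
    refine absurd (hb' (b + (l - d))) (not_le.2 ⟨i - (l - d), ?_, ?_⟩)
    · intro j hj
      have h1 := hi (j + (l - d)) (by omega)
      simp only [Pi.toLex_apply]
      rw [← hf (b + j)]
      convert h1 using 2 <;> omega
    · simp only [Pi.toLex_apply]
      rw [← hf (b + (i - (l - d)))]
      convert hi' using 2 <;> omega
  · apply hmin d hd hdl
    intro x
    have h1 := congrFun (toLex.injective heq) ((l - 1) * b + x)
    obtain ⟨m, rfl⟩ : ∃ m, l = m + 1 := ⟨l - 1, by omega⟩
    have h2 := hf.nat_mul b x
    have h3 := hf.nat_mul b (x + d)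
    simp only [Nat.cast_id] at h2 h3
    rw [← h2, ← h3]
    convert h1.symm using 2 <;> simp <;> ring

/-- Words of equal length `ℓ` whose periodic extensions share a factor of length `ℓ` are
conjugate. -/
lemma conj_of_window_eq {u v : List α} (hu : u ≠ []) (hv : v ≠ []) (hlen : u.length = v.length)
    {a b : ℕ} (h : ∀ x < u.length, per u hu (a + x) = per v hv (b + x)) : Conj u v := by
  have hpos := List.length_pos_iff.2 hu
  have hall : ∀ x, per u hu (a + x) = per v hv (b + x) := by
    intro x
    have h1 := h (x % u.length) (Nat.mod_lt _ hpos)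
    simp only [per, Nat.add_mod_mod] at h1
    simp only [hlen, Nat.add_mod_mod] at h1
    simp only [per, hlen]
    exact h1
  have hrot : u.rotate (a + (u.length - 1) * b) = v := by
    apply List.ext_getElem
    · simp [hlen]
    · intro i h1 h2
      have h3 := hall ((u.length - 1) * b + i)
      have h4 := (per_periodic v hv).nat_mul b i
      have h5 : b + ((u.length - 1) * b + i) = i + b * v.length := by
        obtain ⟨m, hm⟩ : ∃ m, u.length = m + 1 := ⟨u.length - 1, by omega⟩
        rw [← hlen, hm]; simp; ring
      simp only [Nat.cast_id] at h4
      rw [h5, h4] at h3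
      rw [List.getElem_rotate]
      simp only [per, Nat.mod_eq_of_lt h2] at h3
      rw [← h3]
      congr 2
      ring
  rw [List.rotate_eq_drop_append_take_mod] at hrot
  exact ⟨_, _, (List.take_append_drop _ u).symm, hrot.symm⟩

end Primitivity

/-! ### Factor complexity and the active intervals -/

section Complexity

variable {α : Type*}

lemma mem_factors_iff (w : List α) (m : ℕ) (v : List α) :
    (v <:+: w ∧ v.length = m) ↔ ∃ k, k + m ≤ w.length ∧ v = (w.drop k).take m := by
  constructor
  · rintro ⟨⟨s, t, rfl⟩, rfl⟩
    exact ⟨s.length, by simp, by simp⟩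
  · rintro ⟨k, hk, rfl⟩
    refine ⟨(List.take_prefix _ _).isInfix.trans (List.drop_suffix _ _).isInfix, ?_⟩
    simp; omega

lemma factors_subset (w : List α) (m : ℕ) :
    {v : List α | v <:+: w ∧ v.length = m} ⊆
      (fun k => (w.drop k).take m) '' (Finset.range (w.length + 1 - m) : Set ℕ) := by
  intro v hv
  obtain ⟨k, hk, rfl⟩ := (mem_factors_iff w m v).1 hv
  exact ⟨k, by simp; omega, rfl⟩

lemma factors_finite (w : List α) (m : ℕ) :
    {v : List α | v <:+: w ∧ v.length = m}.Finite :=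
  (((Finset.range _).finite_toSet).image _).subset (factors_subset w m)

lemma complexity_le (w : List α) (m : ℕ) : complexity w m ≤ w.length + 1 - m := by
  refine (Set.ncard_le_ncard (factors_subset w m) (((Finset.range _).finite_toSet).image _)).trans ?_
  refine (Set.ncard_image_le (Finset.finite_toSet _)).trans ?_
  simp

/-- If `[u]_ℓ ⊆ Fac(w)` for a primitive `u` of length `ℓ`, then `w` has at least `ℓ` factors of
length `ℓ`, namely the conjugates of `u`. -/
lemma length_le_complexity {w u : List α} (hu : Primitive u) (h : PerFac u u.length ⊆ Fac w) :
    u.length ≤ complexity w u.length := by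
  have h1 : ((fun k => window (per u hu.1) k u.length) '' (Finset.range u.length : Set ℕ)) ⊆
      {v : List α | v <:+: w ∧ v.length = u.length} := by
    rintro _ ⟨k, -, rfl⟩
    exact ⟨h ((mem_perFac_iff u hu.1 _ _).2 ⟨k, rfl⟩), by simp⟩
  have hlt : ∀ a b, a < b → b < u.length →
      window (per u hu.1) a u.length ≠ window (per u hu.1) b u.length := by
    intro a b hab hb heq
    rw [window_eq_iff] at heq
    have hall : ∀ x, per u hu.1 (a + x) = per u hu.1 (b + x) := by
      intro x
      have := heq (x % u.length) (Nat.mod_lt _ (List.length_pos_iff.2 hu.1))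
      simpa [per] using this
    refine hu.not_periodic (d := b - a) (by omega) (by omega) fun x => ?_
    have h2 := hall (x + u.length - a)
    have h3 : a + (x + u.length - a) = x + u.length := by omega
    have h4 : b + (x + u.length - a) = x + (b - a) + u.length := by omega
    rw [h3, h4, per_periodic, per_periodic] at h2
    exact h2.symm
  have hinj : Set.InjOn (fun k => window (per u hu.1) k u.length)
      (Finset.range u.length : Set ℕ) := by
    intro a ha b hb hab
    simp only [Finset.coe_range, Set.mem_Iio] at ha hb
    rcases lt_trichotomy a b with hlt' | heq | hgt
    · exact absurd hab (hlt a b hlt' hb)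
    · exact heq
    · exact absurd hab.symm (hlt b a hgt ha)
  have h2 := Set.ncard_le_ncard h1 (factors_finite w _)
  rw [hinj.ncard_image, Set.ncard_coe_finset, Finset.card_range] at h2
  exact h2

/-- The small-circuit condition is inherited by smaller orders `q' ≥ |u|`. -/
lemma SC.mono {w u : List α} (hu : u ≠ []) {q q' : ℕ} (h : SC w u q) (h1 : u.length ≤ q')
    (h2 : q' ≤ q) : SC w u q' := by
  have key : ∀ r ≤ q + 1, PerFac u r ⊆ Fac w := by
    intro r hr v hv
    obtain ⟨k, rfl⟩ := (mem_perFac_iff u hu _ _).1 hv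
    have h3 : window (per u hu) k (q + 1) <:+: w :=
      h.2.2 ((mem_perFac_iff u hu _ _).2 ⟨k, rfl⟩)
    obtain ⟨s, hs⟩ := Nat.exists_eq_add_of_le hr
    rw [hs, window_add] at h3
    exact (List.prefix_append _ _).isInfix.trans h3
  exact ⟨h1, key _ (by omega), key _ (by omega)⟩

lemma SC.lt_length {w u : List α} (hu : u ≠ []) {q : ℕ} (h : SC w u q) : q < w.length := by
  have h3 : window (per u hu) 0 (q + 1) <:+: w :=
    h.2.2 ((mem_perFac_iff u hu _ _).2 ⟨0, rfl⟩)
  simpa using h3.length_le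

end Complexity

/-! ### Small circuits in Rauzy graphs -/

section RauzyGraph

variable {α : Type*}

/-- The boundary of the edge `e` of the Rauzy graph of order `q` (a word of length `q + 1`):
its terminal vertex, the suffix of length `q`, minus its initial vertex, the prefix of
length `q`. -/
noncomputable def bdry (q : ℕ) (e : List α) : List α →₀ ℚ :=
  Finsupp.single e.tail 1 - Finsupp.single (e.take q) 1

lemma bdry_window (f : ℕ → α) (k q : ℕ) : bdry q (window f k (q + 1)) =
    Finsupp.single (window f (k + 1) q) 1 - Finsupp.single (window f k q) 1 := by
  have h1 : (window f k (q + 1)).take q = window f k q := by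
    rw [window_add, List.take_left' (by simp)]
  rw [bdry, h1, window_succ, List.tail_cons]

/-- The boundary of a closed circuit vanishes, so the boundary of one edge of a circuit is minus
the sum of the boundaries of its other edges. -/
lemma bdry_window_eq (f : ℕ → α) {l : ℕ} (hl : 0 < l) (hf : Function.Periodic f l) (k q : ℕ) :
    bdry q (window f k (q + 1)) =
      - ∑ i ∈ Finset.range (l - 1), bdry q (window f (k + (i + 1)) (q + 1)) := by
  obtain ⟨m, rfl⟩ : ∃ m, l = m + 1 := ⟨l - 1, by omega⟩
  have h1 : ∑ i ∈ Finset.range (m + 1), bdry q (window f (k + i) (q + 1)) = 0 := by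
    simp only [bdry_window, add_assoc]
    rw [Finset.sum_range_sub (fun i => Finsupp.single (window f (k + i) q) (1 : ℚ)), sub_eq_zero]
    congr 1
    rw [window_eq_iff]
    intro x _
    rw [add_right_comm, hf, add_zero]
  rw [Finset.sum_range_succ'] at h1
  rw [eq_neg_iff_add_eq_zero, add_comm]
  simpa using h1

/-- The number of small circuits in the Rauzy graph of order `q` is at most its cyclomatic
number `p(q+1) - p(q) + 1`. -/
lemma card_circuits_le {ι : Type*} (w : List α) (u : ι → List α)
    (hprim : ∀ i, Primitive (u i)) (hnc : ∀ i j, i ≠ j → ¬ Conj (u i) (u j)) (q : ℕ)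
    (s : Finset ι) (hs : ∀ i ∈ s, SC w (u i) q) :
    s.card + complexity w q ≤ complexity w (q + 1) + 1 := by
  classical
  have hpos : ∀ i, 0 < (u i).length := fun i => List.length_pos_iff.2 (hprim i).1
  choose b hb using fun i => exists_unbordered (per (u i) (hprim i).1) (hpos i)
    (per_periodic _ _) (fun d h1 h2 => (hprim i).not_periodic h1 h2)
  -- `e i` is an edge of the `i`-th circuit that lies on no other circuit of length `≤ |u i|`.
  set e : ι → List α := fun i => window (per (u i) (hprim i).1) (b i) (q + 1) with he
  have hpriv : ∀ i ∈ s, ∀ k ∈ s, i ≠ k → ∀ a,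
      window (per (u i) (hprim i).1) a (q + 1) = e k → (u i).length < (u k).length → False := by
    intro i _ k hk _ a h hlt
    rw [he, window_eq_iff] at h
    obtain ⟨x, hx, hne⟩ := hb k (u i).length (hpos i) hlt
    have hq := (hs k hk).1
    apply hne
    rw [add_assoc, ← h (x + (u i).length) (by omega), ← h x (by omega), ← add_assoc]
    exact per_periodic _ _ _
  have hpriv' : ∀ i ∈ s, ∀ k ∈ s, i ≠ k → ∀ a,
      window (per (u i) (hprim i).1) a (q + 1) = e k → (u k).length < (u i).length := by
    intro i hi k hk hik a h
    by_contra hle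
    rcases (not_lt.1 hle).lt_or_eq with hlt | heq
    · exact hpriv i hi k hk hik a h hlt
    · rw [he, window_eq_iff] at h
      have hq := (hs i hi).1
      exact hnc i k hik (conj_of_window_eq (hprim i).1 (hprim k).1 heq
        fun x hx => h x (by omega))
  have hinj : Set.InjOn e s := by
    intro i hi k hk hik
    by_contra hne
    have h1 := hpriv' i hi k hk hne _ hik
    have h2 := hpriv' k hk i hi (Ne.symm hne) _ hik.symm
    omega
  set V := (factors_finite w q).toFinset with hV
  set E := (factors_finite w (q + 1)).toFinset with hE
  have hVc : complexity w q = V.card := Set.ncard_eq_toFinset_card _ _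
  have hEc : complexity w (q + 1) = E.card := Set.ncard_eq_toFinset_card _ _
  have hwin : ∀ i ∈ s, ∀ a, window (per (u i) (hprim i).1) a (q + 1) ∈ E := by
    intro i hi a
    simp only [hE, Set.Finite.mem_toFinset, Set.mem_ofPred_eq, window_length, and_true]
    exact (hs i hi).2.2 ((mem_perFac_iff _ (hprim i).1 _ _).2 ⟨a, rfl⟩)
  have hsub : s.image e ⊆ E := by
    intro v hv
    obtain ⟨i, hi, rfl⟩ := Finset.mem_image.1 hv
    exact hwin i hi _
  set S : Finset (List α →₀ ℚ) :=
    insert (Finsupp.single (w.take q) 1) ((E \ s.image e).image (bdry q)) with hS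
  have hSc : S.card ≤ E.card - s.card + 1 := by
    refine (Finset.card_insert_le _ _).trans (Nat.add_le_add_right ?_ 1)
    refine Finset.card_image_le.trans ?_
    rw [Finset.card_sdiff_of_subset hsub, Finset.card_image_of_injOn hinj]
  have hsE : s.card ≤ E.card := by
    rw [← Finset.card_image_of_injOn hinj]; exact Finset.card_le_card hsub
  -- The deleted edges are redundant, by induction on the length of their circuits.
  have hdel : ∀ m, ∀ i ∈ s, (u i).length = m →
      bdry q (e i) ∈ Submodule.span ℚ (S : Set (List α →₀ ℚ)) := by
    intro m
    induction m using Nat.strong_induction_on with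
    | _ m ih =>
      intro i hi him
      rw [he, bdry_window_eq _ (hpos i) (per_periodic _ _)]
      refine Submodule.neg_mem _ (Submodule.sum_mem _ fun j hj => ?_)
      rw [Finset.mem_range] at hj
      by_cases hmem : window (per (u i) (hprim i).1) (b i + (j + 1)) (q + 1) ∈ s.image e
      · obtain ⟨k, hk, hke⟩ := Finset.mem_image.1 hmem
        by_cases hik : i = k
        · -- A circuit meets its own private edge only once, as that edge has no short period.
          subst hik
          exfalso
          rw [he, window_eq_iff] at hke
          obtain ⟨x, hx, hne⟩ := hb i (j + 1) (by omega) (by omega)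
          have hq := (hs i hi).1
          apply hne
          rw [hke x (by omega)]
          congr 1; omega
        · rw [← hke]
          exact ih _ (him ▸ hpriv' i hi k hk hik _ hke.symm) k hk rfl
      · apply Submodule.subset_span
        simp only [hS, Finset.coe_insert]
        right
        exact Finset.mem_image_of_mem _ (Finset.mem_sdiff.2 ⟨hwin i hi _, hmem⟩)
  have hedge : ∀ v ∈ E, bdry q v ∈ Submodule.span ℚ (S : Set (List α →₀ ℚ)) := by
    intro v hv
    by_cases hmem : v ∈ s.image e
    · obtain ⟨i, hi, rfl⟩ := Finset.mem_image.1 hmem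
      exact hdel _ i hi rfl
    · apply Submodule.subset_span
      simp only [hS, Finset.coe_insert]
      right
      exact Finset.mem_image_of_mem _ (Finset.mem_sdiff.2 ⟨hv, hmem⟩)
  -- Reading `w` from left to right reaches every vertex from the prefix of length `q`.
  have hvert : ∀ k, k + q ≤ w.length →
      Finsupp.single ((w.drop k).take q) (1 : ℚ) ∈
        Submodule.span ℚ (S : Set (List α →₀ ℚ)) := by
    intro k
    induction k with
    | zero => intro _; exact Submodule.subset_span (by simp [hS])
    | succ k ih =>
      intro hk
      have h1 := ih (by omega)
      have h2 := hedge ((w.drop k).take (q + 1)) (by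
        simp only [hE, Set.Finite.mem_toFinset, Set.mem_ofPred_eq]
        exact (mem_factors_iff w (q + 1) _).2 ⟨k, by omega, rfl⟩)
      have h3 : ((w.drop k).take (q + 1)).tail = (w.drop (k + 1)).take q := by
        rw [List.drop_eq_getElem_cons (show k < w.length by omega),
            List.take_succ_cons, List.tail_cons]
      have h4 : ((w.drop k).take (q + 1)).take q = (w.drop k).take q := by
        rw [List.take_take]; simp
      rw [bdry, h3, h4] at h2
      simpa using Submodule.add_mem _ h2 h1
  have hVS : V.card ≤ S.card := by
    have hli : LinearIndependent ℚ (fun v : V => Finsupp.single (v : List α) (1 : ℚ)) :=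
      (Finsupp.linearIndependent_single_one ℚ (List α)).comp _ Subtype.val_injective
    have h1 := finrank_span_eq_card hli
    rw [Fintype.card_coe] at h1
    rw [← h1]
    refine (Submodule.finrank_mono (Submodule.span_le.2 ?_)).trans
      (finrank_span_finset_le_card S)
    rintro _ ⟨⟨v, hv⟩, rfl⟩
    simp only [hV, Set.Finite.mem_toFinset] at hv
    obtain ⟨k, hk, rfl⟩ := (mem_factors_iff w q v).1 hv
    exact hvert k hk
  omega

end RauzyGraph

/-! ### Summation over the active interval -/

/-- For every `j`, `Σ_{i ≠ j} |I_i ∩ I_j| ≤ N - 2ℓ_j - m_j`, where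
`I_i = {q : SC_w(u_i, q)}`, `m_j = M(u_j)` and `N = n + 1`. -/
theorem stmt_9 {α : Type*} (w : List α) (n N t : ℕ)
    (hn : w.length = n) (hN : N = n + 1)
    (u : Fin t → List α)
    (hprim : ∀ i, Primitive (u i))
    (hsq : ∀ i, (u i ++ u i) <:+: w)
    (hnc : ∀ i j, i ≠ j → ¬ Conj (u i) (u j))
    (j : Fin t) :
    (∑ i ∈ Finset.univ.erase j,
        (Set.ncard ({q : ℕ | SC w (u i) q} ∩ {q : ℕ | SC w (u j) q}) : ℤ)) ≤
      (N : ℤ) - 2 * (u j).length - Mnum w (u j) := by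
  classical
  subst hn hN
  rcases Set.eq_empty_or_nonempty {q : ℕ | SC w (u j) q} with hemp | hne
  · have h1 := (hsq j).length_le
    rw [List.length_append] at h1
    simp only [Mnum, hemp, Set.inter_empty, Set.ncard_empty, Nat.cast_zero,
      Finset.sum_const_zero]
    push_cast
    omega
  · have hfin : {q : ℕ | SC w (u j) q}.Finite :=
      (Set.finite_lt_nat w.length).subset fun q hq => hq.lt_length (hprim j).1
    obtain ⟨c, hc, hcmax⟩ := hfin.exists_maximalFor id _ hne
    have hI : {q : ℕ | SC w (u j) q} = (Finset.Ico (u j).length (c + 1) : Set ℕ) := by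
      ext q
      simp only [Set.mem_ofPred_eq, Finset.coe_Ico, Set.mem_Ico]
      constructor
      · intro hq
        refine ⟨hq.1, ?_⟩
        by_contra hlt
        have := hcmax hq (by simp only [id]; omega)
        simp only [id] at this
        omega
      · rintro ⟨h1, h2⟩
        exact SC.mono (hprim j).1 hc h1 (by omega)
    have hlc : (u j).length ≤ c := hc.1
    have hcw : c < w.length := SC.lt_length (hprim j).1 hc
    have hM : (Mnum w (u j) : ℤ) = c + 1 - (u j).length := by
      rw [Mnum, hI, Set.ncard_coe_finset, Nat.card_Ico]
      omega
    have hcount : ∀ i, (Set.ncard ({q : ℕ | SC w (u i) q} ∩ {q : ℕ | SC w (u j) q}) : ℤ) =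
        ∑ q ∈ Finset.Ico (u j).length (c + 1), if SC w (u i) q then 1 else 0 := by
      intro i
      have : ({q : ℕ | SC w (u i) q} ∩ {q : ℕ | SC w (u j) q}) =
          ((Finset.Ico (u j).length (c + 1)).filter fun q => SC w (u i) q : Set ℕ) := by
        rw [hI]; ext q; simp [and_comm]
      rw [this, Set.ncard_coe_finset, Finset.card_filter]
      push_cast
      rfl
    have hstep : ∀ q ∈ Finset.Ico (u j).length (c + 1),
        (∑ i ∈ Finset.univ.erase j, if SC w (u i) q then (1 : ℤ) else 0) ≤
          (complexity w (q + 1) : ℤ) - complexity w q := by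
      intro q hq
      have hjq : SC w (u j) q := by
        have : q ∈ {q : ℕ | SC w (u j) q} := by rw [hI]; exact hq
        exact this
      have h1 := card_circuits_le w u hprim hnc q
        (insert j ((Finset.univ.erase j).filter fun i => SC w (u i) q)) (by
          intro i hi
          rcases Finset.mem_insert.1 hi with rfl | hi
          · exact hjq
          · exact (Finset.mem_filter.1 hi).2)
      rw [Finset.card_insert_of_notMem (by simp)] at h1
      rw [Finset.sum_boole]
      omega
    have htel := Finset.sum_Ico_sub (fun q => (complexity w q : ℤ))
      (show (u j).length ≤ c + 1 by omega)
    have h1 := complexity_le w (c + 1)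
    have h2 := length_le_complexity (hprim j)
      (SC.mono (hprim j).1 hc le_rfl hlc).2.1
    rw [Finset.sum_congr rfl fun i _ => hcount i, Finset.sum_comm, hM]
    have h3 := Finset.sum_le_sum hstep
    rw [htel] at h3
    push_cast
    omega
end
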